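/- arXiv:1203.4358 — 5 statements merged into one kernel-verified Lean document; each statement's English description precedes it below -/
import Mathlib

section
/- Let C > 0 and let E be the reliability function E(R) = C/2 − R for 0 ≤ R ≤ C/4, E(R) = (√C − √R)² for C/4 ≤ R ≤ C. Then for every R ∈ [0, C], min(2R, E(R)) ≤ C/3, and equality holds if and only if R = C/6. -/
/-- The reliability function of the infinite-bandwidth AWGN channel with capacity `C`:
`E(R) = C/2 − R` for `0 ≤ R ≤ C/4` and `E(R) = (√C − √R)²` for `C/4 ≤ R ≤ C`. -/
noncomputable def awgnE (C R : ℝ) : ℝ :=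
  if R ≤ C / 4 then C / 2 - R else (Real.sqrt C - Real.sqrt R) ^ 2

/-! As the rate `R` grows, `2R` strictly increases and the reliability function strictly decreases,
so their minimum is maximal exactly where the two curves cross. The crossing lies on the linear
branch of the reliability function, where it solves `2R = C/2 − R`. -/

section Crossing

variable {α β : Type*} [LinearOrder α] [LinearOrder β] {f g : α → β} {s : Set α} {a x : α}

theorem min_le_of_monotoneOn_antitoneOn (hf : MonotoneOn f s) (hg : AntitoneOn g s)
    (hfg : f a = g a) (ha : a ∈ s) (hx : x ∈ s) : min (f x) (g x) ≤ f a := by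
  rcases le_total x a with hxa | hax
  · exact min_le_of_left_le (hf hx ha hxa)
  · exact min_le_of_right_le (hfg ▸ hg ha hx hax)

theorem min_eq_iff_of_strictMonoOn_strictAntiOn (hf : StrictMonoOn f s) (hg : StrictAntiOn g s)
    (hfg : f a = g a) (ha : a ∈ s) (hx : x ∈ s) : min (f x) (g x) = f a ↔ x = a := by
  refine ⟨fun hmin ↦ ?_, fun hxa ↦ by rw [hxa, ← hfg, min_self]⟩
  have hfx : f a ≤ f x := hmin ▸ min_le_left _ _
  have hgx : g a ≤ g x := hfg ▸ hmin ▸ min_le_right _ _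
  exact le_antisymm ((hg.le_iff_ge ha hx).1 hgx) ((hf.le_iff_le ha hx).1 hfx)

end Crossing

theorem strictAntiOn_sq_sqrt_sub_sqrt (C : ℝ) :
    StrictAntiOn (fun R ↦ (√C - √R) ^ 2) (Set.Icc 0 C) := by
  intro R hR S hS hRS
  have hsqrt : √R < √S := Real.sqrt_lt_sqrt hR.1 hRS
  have hnonneg : 0 ≤ √C - √S := sub_nonneg.2 (Real.sqrt_le_sqrt hS.2)
  exact pow_lt_pow_left₀ (sub_lt_sub_left hsqrt _) hnonneg two_ne_zero

theorem awgnE_of_le {C R : ℝ} (h : R ≤ C / 4) : awgnE C R = C / 2 - R :=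
  if_pos h

theorem awgnE_of_ge {C R : ℝ} (hC : 0 ≤ C) (h : C / 4 ≤ R) : awgnE C R = (√C - √R) ^ 2 := by
  rcases h.eq_or_lt with rfl | hlt
  · have hsqrt : √(C / 4) = √C / 2 := by
      rw [Real.sqrt_div hC, show (4 : ℝ) = 2 ^ 2 by norm_num, Real.sqrt_sq zero_le_two]
    rw [awgnE_of_le le_rfl, hsqrt]
    linear_combination (-1 / 4) * Real.sq_sqrt hC
  · exact if_neg hlt.not_ge

theorem strictAntiOn_awgnE {C : ℝ} (hC : 0 ≤ C) : StrictAntiOn (awgnE C) (Set.Iic C) := by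
  have hquarter : C / 4 ≤ C := by linarith
  have hlinear : StrictAntiOn (awgnE C) (Set.Iic (C / 4)) := by
    intro R hR S hS hRS
    rw [awgnE_of_le hR, awgnE_of_le hS]
    exact sub_lt_sub_left hRS _
  have hcurved : StrictAntiOn (awgnE C) (Set.Icc (C / 4) C) :=
    ((strictAntiOn_sq_sqrt_sub_sqrt C).mono (Set.Icc_subset_Icc_left (by positivity))).congr
      fun _ hR ↦ (awgnE_of_ge hC hR.1).symm
  rw [← Set.Iic_union_Icc_eq_Iic hquarter]
  exact hlinear.union hcurved isGreatest_Iic (isLeast_Icc hquarter)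

/-- For `C > 0` and every `R ∈ [0, C]`, `min(2R, E(R)) ≤ C/3`, with equality
if and only if `R = C/6`. -/
theorem min_twoR_awgnE_le (C : ℝ) (hC : 0 < C) :
    ∀ R ∈ Set.Icc (0 : ℝ) C,
      min (2 * R) (awgnE C R) ≤ C / 3 ∧
      (min (2 * R) (awgnE C R) = C / 3 ↔ R = C / 6) := by
  intro R hR
  have hmono : StrictMonoOn (fun S : ℝ ↦ 2 * S) (Set.Iic C) :=
    (strictMono_mul_left_of_pos two_pos).strictMonoOn _
  have hanti : StrictAntiOn (awgnE C) (Set.Iic C) := strictAntiOn_awgnE hC.le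
  have hvalue : C / 3 = 2 * (C / 6) := by ring
  have hcross : 2 * (C / 6) = awgnE C (C / 6) := by
    rw [awgnE_of_le (by linarith)]
    ring
  have hmem : C / 6 ∈ Set.Iic C := Set.mem_Iic.2 (by linarith)
  rw [hvalue]
  exact ⟨min_le_of_monotoneOn_antitoneOn hmono.monotoneOn hanti.antitoneOn hcross hmem hR.2,
    min_eq_iff_of_strictMonoOn_strictAntiOn hmono hanti hcross hmem hR.2⟩
end

section
/- Let R and c be real numbers with 0 < R < c, and let T ≥ √R / (2√c · (√c − √R)²). Then the function s ↦ exp(−T·(√s − √R)²) is convex on the interval [c, ∞). -/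
/-! The composite `exp ∘ f` is convex as soon as `f'' + f' ^ 2 ≥ 0`. For `f s = -T * (√s - r) ^ 2`
with `T ≥ 0` and `√s > r ≥ 0` this condition follows from `r / (2 * √s * (√s - r) ^ 2) ≤ T`, whose
left-hand side decreases in `s`, so the left endpoint of the interval is the worst case. -/

theorem convexOn_exp_of_hasDerivWithinAt2 {D : Set ℝ} (hD : Convex ℝ D) {f f' f'' : ℝ → ℝ}
    (hf : ContinuousOn f D)
    (hf' : ∀ x ∈ interior D, HasDerivWithinAt f (f' x) (interior D) x)
    (hf'' : ∀ x ∈ interior D, HasDerivWithinAt f' (f'' x) (interior D) x)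
    (hnonneg : ∀ x ∈ interior D, 0 ≤ f'' x + f' x ^ 2) :
    ConvexOn ℝ D (fun x => Real.exp (f x)) := by
  refine convexOn_of_hasDerivWithinAt2_nonneg hD hf.rexp (fun x hx => (hf' x hx).exp)
    (f'' := fun x => Real.exp (f x) * (f'' x + f' x ^ 2)) (fun x hx => ?_)
    (fun x hx => mul_nonneg (Real.exp_pos _).le (hnonneg x hx))
  exact ((hf' x hx).exp.mul (hf'' x hx)).congr_deriv (by ring)

theorem hasDerivAt_sqrt_sub_sq (r : ℝ) {s : ℝ} (hs : 0 < s) :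
    HasDerivAt (fun x => (√x - r) ^ 2) (1 - r / √s) s := by
  have hsqrt : √s ≠ 0 := (Real.sqrt_pos.2 hs).ne'
  refine (((Real.hasDerivAt_sqrt hs.ne').sub_const r).fun_pow 2).congr_deriv ?_
  field_simp
  ring

theorem hasDerivAt_one_sub_div_sqrt (r : ℝ) {s : ℝ} (hs : 0 < s) :
    HasDerivAt (fun x => 1 - r / √x) (r / (2 * √s ^ 3)) s := by
  have hsqrt : √s ≠ 0 := (Real.sqrt_pos.2 hs).ne'
  refine (((hasDerivAt_const s r).fun_div (Real.hasDerivAt_sqrt hs.ne') hsqrt).const_sub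
    1).congr_deriv ?_
  field_simp
  ring

theorem antitoneOn_div_two_mul_mul_sub_sq {r : ℝ} (hr : 0 ≤ r) :
    AntitoneOn (fun u => r / (2 * u * (u - r) ^ 2)) (Set.Ioi r) := by
  intro u (hu : r < u) v _ huv
  have hu_pos : 0 < u := hr.trans_lt hu
  have hv_pos : 0 < v := hu_pos.trans_le huv
  have hden : 0 < 2 * u * (u - r) ^ 2 := by positivity
  refine div_le_div_of_nonneg_left hr hden ?_
  gcongr

theorem neg_mul_div_add_sq_nonneg {r u T : ℝ} (hr : 0 ≤ r) (hru : r < u)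
    (hT : r / (2 * u * (u - r) ^ 2) ≤ T) :
    0 ≤ -T * (r / (2 * u ^ 3)) + (-T * (1 - r / u)) ^ 2 := by
  have hu : 0 < u := hr.trans_lt hru
  have hden : 0 < 2 * u * (u - r) ^ 2 := by positivity
  have hT_nonneg : 0 ≤ T := (div_nonneg hr hden.le).trans hT
  have hr_le : r ≤ T * (2 * u * (u - r) ^ 2) := (div_le_iff₀ hden).1 hT
  calc
    0 ≤ T / (2 * u ^ 3) * (T * (2 * u * (u - r) ^ 2) - r) :=
      mul_nonneg (by positivity) (sub_nonneg.2 hr_le)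
    _ = -T * (r / (2 * u ^ 3)) + (-T * (1 - r / u)) ^ 2 := by
      field_simp
      ring

/-- For `0 < R < c` and `T ≥ √R / (2√c·(√c − √R)²)`, the function
`s ↦ exp(−T·(√s − √R)²)` is convex on `[c, ∞)`. -/
theorem convexOn_exp_neg_mul_sqrt_sub_sq
    (R c T : ℝ) (hR : 0 < R) (hRc : R < c)
    (hT : Real.sqrt R / (2 * Real.sqrt c * (Real.sqrt c - Real.sqrt R) ^ 2) ≤ T) :
    ConvexOn ℝ (Set.Ici c) (fun s => Real.exp (-T * (Real.sqrt s - Real.sqrt R) ^ 2)) := by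
  have hc : 0 < c := hR.trans hRc
  have hsqrt_lt : √R < √c := Real.sqrt_lt_sqrt hR.le hRc
  refine convexOn_exp_of_hasDerivWithinAt2 (convex_Ici c) (by fun_prop)
    (f' := fun s => -T * (1 - √R / √s)) (f'' := fun s => -T * (√R / (2 * √s ^ 3))) ?_ ?_ ?_
  all_goals
    rw [interior_Ici]
    intro s (hs : c < s)
  · exact ((hasDerivAt_sqrt_sub_sq √R (hc.trans hs)).const_mul (-T)).hasDerivWithinAt
  · exact ((hasDerivAt_one_sub_div_sqrt √R (hc.trans hs)).const_mul (-T)).hasDerivWithinAt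
  · have hsqrt_le : √c ≤ √s := Real.sqrt_le_sqrt hs.le
    have hsqrt_lt' : √R < √s := hsqrt_lt.trans_le hsqrt_le
    have hT_s : √R / (2 * √s * (√s - √R) ^ 2) ≤ T :=
      (antitoneOn_div_two_mul_mul_sub_sq R.sqrt_nonneg hsqrt_lt hsqrt_lt' hsqrt_le).trans hT
    exact neg_mul_div_add_sq_nonneg R.sqrt_nonneg hsqrt_lt' hT_s
end

section
/- Let Q denote the Gaussian tail function Q(x) = ∫_x^∞ (1/√(2π)) e^{−t²/2} dt. For every σ > 0 and t > 0, ∫₀^∞ (a/σ²) e^{−a²/(2σ²)} Q(a√t) da = (1/π) ∫₀^{π/2} sin²θ / (σ²t + sin²θ) dθ. -/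
open MeasureTheory Real

/-- The Gaussian tail function `Q(x) = ∫_x^∞ (1/√(2π)) e^{−t²/2} dt`. -/
noncomputable def gaussQ (x : ℝ) : ℝ :=
  ∫ t in Set.Ioi x, (1 / Real.sqrt (2 * Real.pi)) * Real.exp (-t ^ 2 / 2)

/-!
The integral of `e^{-(u² + v²)/2}` over the region `u > 0`, `v > x` is `π Q(x)`. In polar
coordinates, for `x ≥ 0`, the region is `0 < θ < π/2`, `r > x / sin θ`, and the radial integral is
elementary; this gives Craig's formula `π Q(x) = ∫₀^{π/2} e^{-x²/(2 sin² θ)} dθ`. Averaging it over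
`x` and exchanging the integrals leaves, for each `θ`, the Laplace transform of the law of `x²`,
which for the Rayleigh density is again an elementary Gaussian integral.
-/

open Set Filter Topology
open scoped Interval

section Fubini

variable {α β E : Type*} [MeasurableSpace α] [MeasurableSpace β] [NormedAddCommGroup E]
  [NormedSpace ℝ E] {μ : Measure α} {ν : Measure β} [SFinite μ] [SFinite ν]

lemma setIntegral_prod_eq_integral_setIntegral_slice {s : Set (α × β)} (hs : MeasurableSet s)
    {f : α × β → E} (hf : IntegrableOn f s (μ.prod ν)) :
    ∫ p in s, f p ∂μ.prod ν = ∫ y, ∫ x in {x | (x, y) ∈ s}, f (x, y) ∂μ ∂ν := by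
  have h_slice (y : β) : MeasurableSet {x | (x, y) ∈ s} := measurable_prodMk_right hs
  rw [← integral_indicator hs, integral_prod_symm _ (hf.integrable_indicator hs)]
  simp only [← integral_indicator (h_slice _)]
  rfl

end Fubini

section Gaussian

lemma integral_Ioi_mul_exp_neg_mul_sq {b : ℝ} (hb : 0 < b) (c : ℝ) :
    ∫ r in Ioi c, r * exp (-b * r ^ 2) = exp (-b * c ^ 2) / (2 * b) := by
  have h_deriv (r : ℝ) :
      HasDerivAt (fun r ↦ -exp (-b * r ^ 2) / (2 * b)) (r * exp (-b * r ^ 2)) r := by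
    refine ((((hasDerivAt_pow 2 r).const_mul (-b)).exp.neg).div_const (2 * b)).congr_deriv ?_
    push_cast
    field_simp
  have h_lim : Tendsto (fun r ↦ -exp (-b * r ^ 2) / (2 * b)) atTop (𝓝 0) := by
    have h_sq : Tendsto (fun r : ℝ ↦ -b * r ^ 2) atTop atBot :=
      (tendsto_pow_atTop two_ne_zero).const_mul_atTop_of_neg (neg_lt_zero.2 hb)
    simpa using (tendsto_exp_atBot.comp h_sq).neg.div_const (2 * b)
  rw [integral_Ioi_of_hasDerivAt_of_tendsto' (fun r _ ↦ h_deriv r)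
    (integrable_mul_exp_neg_mul_sq hb).integrableOn h_lim]
  ring

lemma setIntegral_Ioi_prod_Ioi_exp_neg_sq_add_sq (x : ℝ) :
    ∫ p in Ioi (0 : ℝ) ×ˢ Ioi x, exp (-(p.1 ^ 2 + p.2 ^ 2) / 2) = π * gaussQ x := by
  have h_half : ∫ u in Ioi (0 : ℝ), exp (-u ^ 2 / 2) = √(2 * π) / 2 := by
    simpa [neg_div, div_eq_inv_mul, mul_comm] using integral_gaussian_Ioi (1 / 2)
  have h_tail : ∫ v in Ioi x, exp (-v ^ 2 / 2) = √(2 * π) * gaussQ x := by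
    rw [gaussQ, integral_const_mul]
    field_simp
  calc
    _ = ∫ p in Ioi (0 : ℝ) ×ˢ Ioi x, exp (-p.1 ^ 2 / 2) * exp (-p.2 ^ 2 / 2) := by
      simp only [← exp_add, neg_add, add_div]
    _ = (√(2 * π) / 2) * (√(2 * π) * gaussQ x) := by
      rw [Measure.volume_eq_prod, setIntegral_prod_mul (fun u ↦ exp (-u ^ 2 / 2))
        (fun v ↦ exp (-v ^ 2 / 2)), h_half, h_tail]
    _ = π * gaussQ x := by
      linear_combination gaussQ x / 2 * mul_self_sqrt (show 0 ≤ 2 * π by positivity)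

end Gaussian

section Craig

lemma setIntegral_eq_setIntegral_polarCoord {E : Type*} [NormedAddCommGroup E] [NormedSpace ℝ E]
    {s : Set (ℝ × ℝ)} (hs : MeasurableSet s) (f : ℝ × ℝ → E) :
    ∫ p in s, f p =
      ∫ p in polarCoord.target ∩ polarCoord.symm ⁻¹' s, p.1 • f (polarCoord.symm p) := by
  have hs_polar : MeasurableSet (polarCoord.symm ⁻¹' s) :=
    continuous_polarCoord_symm.measurable hs
  rw [← integral_indicator hs, ← integral_comp_polarCoord_symm, ← setIntegral_indicator hs_polar]
  refine integral_congr_ae (.of_forall fun p ↦ ?_)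
  by_cases hp : polarCoord.symm p ∈ s <;>
    simp only [indicator, hp, mem_preimage, if_true, if_false, smul_zero]

lemma polarCoord_target_inter_preimage_Ioi_prod_Ioi {x : ℝ} (hx : 0 ≤ x) :
    polarCoord.target ∩ polarCoord.symm ⁻¹' (Ioi 0 ×ˢ Ioi x) =
      {p | x / sin p.2 < p.1} ∩ univ ×ˢ Ioo 0 (π / 2) := by
  ext ⟨r, θ⟩
  simp only [polarCoord_target, polarCoord_symm_apply, mem_inter_iff, mem_preimage, mem_prod,
    mem_Ioi, mem_Ioo, mem_ofPred_eq, mem_univ, true_and]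
  constructor
  · rintro ⟨⟨hr, hθ_gt, hθ_lt⟩, h_cos, h_sin⟩
    have h_cos_pos : 0 < cos θ := pos_of_mul_pos_right h_cos hr.le
    have h_sin_pos : 0 < sin θ := pos_of_mul_pos_right (hx.trans_lt h_sin) hr.le
    have hθ_pos : 0 < θ := by
      contrapose! h_sin_pos
      exact sin_nonpos_of_nonpos_of_neg_pi_le h_sin_pos hθ_gt.le
    refine ⟨(div_lt_iff₀ h_sin_pos).2 h_sin, hθ_pos, ?_⟩
    contrapose! h_cos_pos
    exact cos_nonpos_of_pi_div_two_le_of_le h_cos_pos (by linarith)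
  · rintro ⟨hr, hθ_pos, hθ_lt⟩
    have h_sin_pos : 0 < sin θ := sin_pos_of_pos_of_lt_pi hθ_pos (by linarith)
    have h_cos_pos : 0 < cos θ := cos_pos_of_mem_Ioo ⟨by linarith, hθ_lt⟩
    have hr_pos : 0 < r := (div_nonneg hx h_sin_pos.le).trans_lt hr
    exact ⟨⟨hr_pos, by linarith, by linarith⟩, mul_pos hr_pos h_cos_pos,
      (div_lt_iff₀ h_sin_pos).1 hr⟩

/-- **Craig's formula**. At `θ = 0` the integrand has the junk value `exp (-x ^ 2 / 0) = 1`. -/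
theorem gaussQ_eq_integral_exp_neg_sq_div_sin_sq {x : ℝ} (hx : 0 ≤ x) :
    gaussQ x = 1 / π * ∫ θ in (0 : ℝ)..π / 2, exp (-x ^ 2 / (2 * sin θ ^ 2)) := by
  have h_norm_sq (r θ : ℝ) : (r * cos θ) ^ 2 + (r * sin θ) ^ 2 = r ^ 2 := by
    linear_combination r ^ 2 * sin_sq_add_cos_sq θ
  have h_meas : MeasurableSet {p : ℝ × ℝ | x / sin p.2 < p.1} :=
    measurableSet_lt (by fun_prop) measurable_fst
  have h_int : Integrable (fun p : ℝ × ℝ ↦ p.1 * exp (-(1 / 2) * p.1 ^ 2))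
      (volume.prod (volume.restrict (Ioo 0 (π / 2)))) :=
    (integrable_mul_exp_neg_mul_sq one_half_pos).comp_fst _
  have h_polar : π * gaussQ x = ∫ θ in (0 : ℝ)..π / 2, exp (-x ^ 2 / (2 * sin θ ^ 2)) := calc
    π * gaussQ x = ∫ p in {p : ℝ × ℝ | x / sin p.2 < p.1} ∩ univ ×ˢ Ioo 0 (π / 2),
          p.1 * exp (-(p.1 ^ 2) / 2) := by
      rw [← setIntegral_Ioi_prod_Ioi_exp_neg_sq_add_sq,
        setIntegral_eq_setIntegral_polarCoord (measurableSet_Ioi.prod measurableSet_Ioi),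
        polarCoord_target_inter_preimage_Ioi_prod_Ioi hx]
      simp only [polarCoord_symm_apply, h_norm_sq, smul_eq_mul]
    _ = ∫ p in {p : ℝ × ℝ | x / sin p.2 < p.1}, p.1 * exp (-(1 / 2) * p.1 ^ 2)
          ∂volume.prod (volume.restrict (Ioo 0 (π / 2))) := by
      rw [← Measure.restrict_restrict h_meas, Measure.volume_eq_prod, ← Measure.prod_restrict,
        Measure.restrict_univ]
      ring_nf
    _ = ∫ θ in Ioo 0 (π / 2), ∫ r in Ioi (x / sin θ), r * exp (-(1 / 2) * r ^ 2) :=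
      setIntegral_prod_eq_integral_setIntegral_slice h_meas h_int.integrableOn
    _ = ∫ θ in Ioo 0 (π / 2), exp (-x ^ 2 / (2 * sin θ ^ 2)) := by
      simp only [integral_Ioi_mul_exp_neg_mul_sq one_half_pos]
      ring_nf
    _ = ∫ θ in (0 : ℝ)..π / 2, exp (-x ^ 2 / (2 * sin θ ^ 2)) := by
      rw [intervalIntegral.integral_of_le (by positivity), integral_Ioc_eq_integral_Ioo]
  rw [← h_polar]
  field_simp

end Craig

theorem integral_mul_gaussQ {Ω : Type*} [MeasurableSpace Ω] {μ : Measure Ω} [SFinite μ]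
    {w X : Ω → ℝ} (hw : Integrable w μ) (hX : AEMeasurable X μ) (hX_nonneg : 0 ≤ᵐ[μ] X) :
    ∫ ω, w ω * gaussQ (X ω) ∂μ =
      1 / π * ∫ θ in (0 : ℝ)..π / 2, ∫ ω, w ω * exp (-X ω ^ 2 / (2 * sin θ ^ 2)) ∂μ := by
  have : IsFiniteMeasure (volume.restrict (Ι 0 (π / 2))) := by rw [uIoc]; infer_instance
  have h_int : Integrable (fun p : ℝ × Ω ↦ w p.2 * exp (-X p.2 ^ 2 / (2 * sin p.1 ^ 2)))
      ((volume.restrict (Ι 0 (π / 2))).prod μ) := by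
    refine (hw.comp_snd _).mul_bdd (c := 1) ?_ (.of_forall fun p ↦ ?_)
    · exact ((hX.comp_snd.pow_const 2).neg.div (by fun_prop)).exp.aestronglyMeasurable
    · rw [norm_of_nonneg (exp_pos _).le, exp_le_one_iff, neg_div, neg_nonpos]
      positivity
  calc
    _ = ∫ ω, 1 / π * (∫ θ in (0 : ℝ)..π / 2, w ω * exp (-X ω ^ 2 / (2 * sin θ ^ 2))) ∂μ := by
      refine integral_congr_ae (hX_nonneg.mono fun ω hω ↦ ?_)
      simp only [gaussQ_eq_integral_exp_neg_sq_div_sin_sq hω,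
        intervalIntegral.integral_const_mul]
      ring
    _ = 1 / π * ∫ θ in (0 : ℝ)..π / 2, ∫ ω, w ω * exp (-X ω ^ 2 / (2 * sin θ ^ 2)) ∂μ := by
      rw [integral_const_mul, ← intervalIntegral_integral_swap h_int]

section Rayleigh

variable {σ : ℝ}

lemma integrable_rayleigh_density (hσ : σ ≠ 0) :
    Integrable fun a : ℝ ↦ a / σ ^ 2 * exp (-a ^ 2 / (2 * σ ^ 2)) := by
  have hb : 0 < 1 / (2 * σ ^ 2) := by positivity
  refine ((integrable_mul_exp_neg_mul_sq hb).const_mul (1 / σ ^ 2)).congr (.of_forall fun a ↦ ?_)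
  ring_nf

lemma integral_Ioi_rayleigh_density_mul_exp_neg_mul_sq (hσ : σ ≠ 0) {b : ℝ}
    (hb : 0 < 1 + 2 * σ ^ 2 * b) :
    ∫ a in Ioi (0 : ℝ), a / σ ^ 2 * exp (-a ^ 2 / (2 * σ ^ 2)) * exp (-b * a ^ 2) =
      1 / (1 + 2 * σ ^ 2 * b) := by
  have h_rate : 0 < 1 / (2 * σ ^ 2) + b := by
    rw [show 1 / (2 * σ ^ 2) + b = (1 + 2 * σ ^ 2 * b) / (2 * σ ^ 2) by field_simp]
    positivity
  calc
    _ = ∫ a in Ioi (0 : ℝ), 1 / σ ^ 2 * (a * exp (-(1 / (2 * σ ^ 2) + b) * a ^ 2)) := by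
      congr 1 with a
      rw [mul_assoc, ← exp_add]
      ring_nf
    _ = 1 / (1 + 2 * σ ^ 2 * b) := by
      rw [integral_const_mul, integral_Ioi_mul_exp_neg_mul_sq h_rate]
      simp only [ne_eq, OfNat.ofNat_ne_zero, not_false_eq_true, zero_pow, mul_zero, exp_zero]
      field_simp

end Rayleigh

/-- For `σ > 0` and `t > 0`, the Rayleigh average of the Gaussian tail function satisfies
`∫₀^∞ (a/σ²) e^{−a²/(2σ²)} Q(a√t) da = (1/π) ∫₀^{π/2} sin²θ / (σ²t + sin²θ) dθ`. -/
theorem rayleigh_expectation_gaussQ (σ t : ℝ) (hσ : 0 < σ) (ht : 0 < t) :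
    ∫ a in Set.Ioi (0 : ℝ), (a / σ ^ 2) * Real.exp (-a ^ 2 / (2 * σ ^ 2)) *
        gaussQ (a * Real.sqrt t)
      = (1 / π) * ∫ θ in (0 : ℝ)..(π / 2),
          Real.sin θ ^ 2 / (σ ^ 2 * t + Real.sin θ ^ 2) := by
  have h_nonneg : 0 ≤ᵐ[volume.restrict (Ioi 0)] fun a : ℝ ↦ a * √t :=
    (ae_restrict_mem measurableSet_Ioi).mono fun a ha ↦ mul_nonneg (le_of_lt ha) (sqrt_nonneg t)
  rw [integral_mul_gaussQ (integrable_rayleigh_density hσ.ne').integrableOn (by fun_prop) h_nonneg]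
  congr 1
  refine intervalIntegral.integral_congr_Ioo_of_le (by positivity) fun θ hθ ↦ ?_
  have h_sin : 0 < sin θ := sin_pos_of_pos_of_lt_pi hθ.1 (by linarith [hθ.2, pi_pos])
  have h_exponent (a : ℝ) :
      -(a * √t) ^ 2 / (2 * sin θ ^ 2) = -(t / (2 * sin θ ^ 2)) * a ^ 2 := by
    rw [mul_pow, sq_sqrt ht.le]
    ring
  simp only [h_exponent]
  rw [integral_Ioi_rayleigh_density_mul_exp_neg_mul_sq hσ.ne' (by positivity)]
  field_simp
  ring
end

section
/- Let Q denote the Gaussian tail function Q(x) = ∫_x^∞ (1/√(2π)) e^{−t²/2} dt, and let σ > 0 and c > 0. Then lim_{T→∞} T · ∫₀^∞ (a/σ²) e^{−a²/(2σ²)} Q(a√(cT)) da = 1/(4σ²c). -/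
open MeasureTheory Filter

/-!
Integrating by parts against the Rayleigh density gives the closed form
`∫₀^∞ (a/σ²) e^{−a²/(2σ²)} Q(ka) da = (1 − k / √(k² + σ⁻²)) / 2`, since `Q(0) = 1/2` and the
derivative of `Q` is minus the Gaussian density. With `k² = x = cT` and `s = σ⁻²`, the limit follows
from `x (1 − √x / √(x + s)) → s / 2`.
-/

open Set ProbabilityTheory
open scoped Topology

lemma hasDerivAt_integral_Ioi {E : Type*} [NormedAddCommGroup E] [NormedSpace ℝ E]
    [CompleteSpace E] {f : ℝ → E} {a x : ℝ} (hf : IntegrableOn f (Ioi a)) (hax : a < x)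
    (hx : ContinuousAt f x) :
    HasDerivAt (fun y ↦ ∫ t in Ioi y, f t) (-f x) x := by
  have hmeas : StronglyMeasurableAtFilter f (𝓝 x) :=
    ⟨Ioi a, Ioi_mem_nhds hax, hf.aestronglyMeasurable⟩
  have hint : IntervalIntegrable f volume a x :=
    (intervalIntegrable_iff_integrableOn_Ioc_of_le hax.le).2 (hf.mono_set Ioc_subset_Ioi_self)
  refine ((intervalIntegral.integral_hasDerivAt_right hint hmeas hx).const_sub
    (∫ t in Ioi a, f t)).congr_of_eventuallyEq ?_
  filter_upwards [lt_mem_nhds hax] with y hy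
  rw [← intervalIntegral.integral_Ioi_sub_Ioi hf hy.le, sub_sub_cancel]

lemma gaussianPDFReal_zero_one (x : ℝ) :
    gaussianPDFReal 0 1 x = 1 / √(2 * Real.pi) * Real.exp (-x ^ 2 / 2) := by
  simp [gaussianPDFReal]

lemma gaussQ_eq_integral_gaussianPDFReal (x : ℝ) :
    gaussQ x = ∫ t in Ioi x, gaussianPDFReal 0 1 t := by
  simp only [gaussQ, gaussianPDFReal_zero_one]

lemma gaussQ_eq_gaussianReal_real_Ioi (x : ℝ) : gaussQ x = (gaussianReal 0 1).real (Ioi x) := by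
  rw [gaussQ_eq_integral_gaussianPDFReal, measureReal_def,
    gaussianReal_apply_eq_integral 0 one_ne_zero, ENNReal.toReal_ofReal]
  exact integral_nonneg (gaussianPDFReal_nonneg 0 1)

lemma gaussQ_nonneg (x : ℝ) : 0 ≤ gaussQ x :=
  gaussQ_eq_gaussianReal_real_Ioi x ▸ measureReal_nonneg

lemma gaussQ_le_one (x : ℝ) : gaussQ x ≤ 1 :=
  gaussQ_eq_gaussianReal_real_Ioi x ▸ measureReal_le_one

lemma abs_gaussQ_le_one (x : ℝ) : |gaussQ x| ≤ 1 :=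
  (abs_of_nonneg (gaussQ_nonneg x)).trans_le (gaussQ_le_one x)

lemma gaussQ_neg (x : ℝ) : gaussQ (-x) = 1 - gaussQ x := by
  have : NullSingletonClass (gaussianReal 0 1) := nullSingletonClass_gaussianReal one_ne_zero
  have hsymm : (gaussianReal 0 1).map (fun t ↦ -t) = gaussianReal 0 1 := by
    rw [gaussianReal_map_neg, neg_zero]
  calc gaussQ (-x) = (gaussianReal 0 1).real (Ioi (-x)) := gaussQ_eq_gaussianReal_real_Ioi _
    _ = (gaussianReal 0 1).real (Iio x) := by
      rw [← hsymm, map_measureReal_apply measurable_neg measurableSet_Ioi, hsymm]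
      simp
    _ = (gaussianReal 0 1).real (Ioi x)ᶜ := by
      rw [compl_Ioi, measureReal_congr Iio_ae_eq_Iic]
    _ = 1 - gaussQ x := by
      rw [probReal_compl_eq_one_sub measurableSet_Ioi, gaussQ_eq_gaussianReal_real_Ioi]

lemma gaussQ_zero : gaussQ 0 = 1 / 2 := by
  have h := gaussQ_neg 0
  rw [neg_zero] at h
  linarith

lemma hasDerivAt_gaussQ (x : ℝ) : HasDerivAt gaussQ (-gaussianPDFReal 0 1 x) x := by
  have hcont : Continuous (gaussianPDFReal 0 1) := by
    simp only [funext gaussianPDFReal_zero_one]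
    fun_prop
  rw [funext gaussQ_eq_integral_gaussianPDFReal]
  exact hasDerivAt_integral_Ioi (integrable_gaussianPDFReal 0 1).integrableOn (sub_one_lt x)
    hcont.continuousAt

lemma tendsto_exp_neg_mul_sq_atTop {b : ℝ} (hb : 0 < b) :
    Tendsto (fun a : ℝ ↦ Real.exp (-b * a ^ 2)) atTop (𝓝 0) :=
  Real.tendsto_exp_atBot.comp
    ((tendsto_pow_atTop two_ne_zero).const_mul_atTop_of_neg (neg_neg_of_pos hb))

lemma integral_Ioi_mul_rayleigh_eq_add {b C : ℝ} {u u' : ℝ → ℝ} (hb : 0 < b)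
    (hu₀ : ContinuousWithinAt u (Ioi 0) 0) (hu : ∀ a ∈ Ioi (0 : ℝ), HasDerivAt u (u' a) a)
    (hC : ∀ a ∈ Ioi (0 : ℝ), |u a| ≤ C)
    (hu' : IntegrableOn (fun a ↦ u' a * Real.exp (-b * a ^ 2)) (Ioi 0)) :
    ∫ a in Ioi (0 : ℝ), u a * (2 * b * a * Real.exp (-b * a ^ 2)) =
      u 0 + ∫ a in Ioi (0 : ℝ), u' a * Real.exp (-b * a ^ 2) := by
  let v : ℝ → ℝ := fun a ↦ -Real.exp (-b * a ^ 2)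
  have hv (a : ℝ) : HasDerivAt v (2 * b * a * Real.exp (-b * a ^ 2)) a := by
    refine (((hasDerivAt_pow 2 a).const_mul (-b)).exp.neg).congr_deriv ?_
    push_cast
    ring
  have huv' : IntegrableOn (fun a ↦ u a * (2 * b * a * Real.exp (-b * a ^ 2))) (Ioi 0) := by
    have hcont : ContinuousOn u (Ioi 0) := fun a ha ↦ (hu a ha).continuousAt.continuousWithinAt
    have hrayleigh : Integrable fun a : ℝ ↦ 2 * b * a * Real.exp (-b * a ^ 2) := by
      simpa only [mul_assoc] using (integrable_mul_exp_neg_mul_sq hb).const_mul (2 * b)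
    exact hrayleigh.integrableOn.bdd_mul (hcont.aestronglyMeasurable measurableSet_Ioi)
      (ae_restrict_of_forall_mem measurableSet_Ioi hC)
  have hzero : Tendsto (u * v) (𝓝[>] 0) (𝓝 (-u 0)) := by
    have hv₀ : -u 0 = u 0 * v 0 := by simp [v]
    rw [hv₀]
    exact hu₀.mul (hv 0).continuousAt.continuousWithinAt
  have hinfty : Tendsto (u * v) atTop (𝓝 0) := by
    have hv_lim : Tendsto v atTop (𝓝 0) := by
      simpa [v] using (tendsto_exp_neg_mul_sq_atTop hb).neg
    refine isBoundedUnder_le_mul_tendsto_zero ?_ hv_lim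
    exact isBoundedUnder_of_eventually_le ((eventually_gt_atTop 0).mono hC)
  have hu'v : IntegrableOn (u' * v) (Ioi 0) := by
    simpa [v, Pi.mul_def] using hu'.neg
  rw [integral_Ioi_mul_deriv_eq_deriv_mul hu (fun a _ ↦ hv a) huv' hu'v hzero hinfty]
  simp only [v, mul_neg, integral_neg]
  ring

lemma gaussianPDFReal_mul_exp_neg_mul_sq (b k a : ℝ) :
    gaussianPDFReal 0 1 (k * a) * Real.exp (-b * a ^ 2) =
      1 / √(2 * Real.pi) * Real.exp (-((k ^ 2 + 2 * b) / 2) * a ^ 2) := by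
  rw [gaussianPDFReal_zero_one, mul_assoc, ← Real.exp_add]
  ring_nf

lemma integral_Ioi_gaussianPDFReal_mul_exp_neg_mul_sq (b k : ℝ) :
    ∫ a in Ioi (0 : ℝ), gaussianPDFReal 0 1 (k * a) * Real.exp (-b * a ^ 2) =
      1 / (2 * √(k ^ 2 + 2 * b)) := by
  simp only [gaussianPDFReal_mul_exp_neg_mul_sq]
  rw [integral_const_mul, integral_gaussian_Ioi,
    show Real.pi / ((k ^ 2 + 2 * b) / 2) = 2 * Real.pi / (k ^ 2 + 2 * b) by field_simp,
    Real.sqrt_div (by positivity)]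
  field_simp

lemma integral_Ioi_gaussQ_mul_rayleigh {b : ℝ} (hb : 0 < b) (k : ℝ) :
    ∫ a in Ioi (0 : ℝ), gaussQ (k * a) * (2 * b * a * Real.exp (-b * a ^ 2)) =
      (1 - k / √(k ^ 2 + 2 * b)) / 2 := by
  have hderiv (a : ℝ) :
      HasDerivAt (fun a ↦ gaussQ (k * a)) (-k * gaussianPDFReal 0 1 (k * a)) a := by
    refine ((hasDerivAt_gaussQ (k * a)).comp a (hasDerivAt_const_mul k)).congr_deriv ?_
    ring
  have hint : Integrable fun a : ℝ ↦
      -k * gaussianPDFReal 0 1 (k * a) * Real.exp (-b * a ^ 2) := by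
    simp only [mul_assoc, gaussianPDFReal_mul_exp_neg_mul_sq]
    exact ((integrable_exp_neg_mul_sq (by positivity)).const_mul _).const_mul _
  rw [integral_Ioi_mul_rayleigh_eq_add hb (hderiv 0).continuousAt.continuousWithinAt
    (fun a _ ↦ hderiv a) (fun a _ ↦ abs_gaussQ_le_one (k * a)) hint.integrableOn]
  simp only [mul_assoc, integral_const_mul, integral_Ioi_gaussianPDFReal_mul_exp_neg_mul_sq,
    mul_zero, gaussQ_zero]
  ring

lemma integral_Ioi_rayleigh_mul_gaussQ {σ : ℝ} (hσ : σ ≠ 0) (k : ℝ) :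
    ∫ a in Ioi (0 : ℝ), a / σ ^ 2 * Real.exp (-a ^ 2 / (2 * σ ^ 2)) * gaussQ (a * k) =
      (1 - k / √(k ^ 2 + 1 / σ ^ 2)) / 2 := by
  have hb : 0 < 1 / (2 * σ ^ 2) := by positivity
  have hs : 2 * (1 / (2 * σ ^ 2)) = 1 / σ ^ 2 := by field_simp
  rw [← hs, ← integral_Ioi_gaussQ_mul_rayleigh hb]
  congr 1 with a
  rw [hs, mul_comm k a]
  ring_nf

lemma tendsto_sqrt_div_sqrt_add_const_atTop (s : ℝ) :
    Tendsto (fun x : ℝ ↦ √x / √(x + s)) atTop (𝓝 1) := by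
  have hratio : Tendsto (fun x : ℝ ↦ 1 - s / (x + s)) atTop (𝓝 1) := by
    simpa using ((tendsto_atTop_add_const_right _ s tendsto_id).const_div_atTop s).const_sub 1
  rw [← Real.sqrt_one]
  refine hratio.sqrt.congr' ?_
  filter_upwards [eventually_gt_atTop 0, eventually_gt_atTop (-s)] with x hx hxs
  have : x + s ≠ 0 := by linarith
  rw [← Real.sqrt_div hx.le, one_sub_div this, add_sub_cancel_right]

lemma tendsto_mul_one_sub_sqrt_div_sqrt_add_const_atTop (s : ℝ) :
    Tendsto (fun x : ℝ ↦ x * (1 - √x / √(x + s))) atTop (𝓝 (s / 2)) := by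
  have hq := tendsto_sqrt_div_sqrt_add_const_atTop s
  have hlim : Tendsto (fun x : ℝ ↦ s * (√x / √(x + s)) ^ 2 / (1 + √x / √(x + s))) atTop
      (𝓝 (s / 2)) := by
    have hvalue : s / 2 = s * 1 ^ 2 / (1 + 1) := by norm_num
    rw [hvalue]
    exact ((hq.pow 2).const_mul s).div (hq.const_add 1) (by norm_num)
  refine hlim.congr' ?_
  filter_upwards [eventually_gt_atTop 0, eventually_gt_atTop (-s)] with x hx hxs
  have hpos : 0 < x + s := by linarith
  -- With `q = √x / √(x + s)`, `x (1 - q²) = s q²`; divide by `1 + q`.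
  have hq_sq : (√x / √(x + s)) ^ 2 = x / (x + s) := by
    rw [div_pow, Real.sq_sqrt hx.le, Real.sq_sqrt hpos.le]
  have hkey : s * (√x / √(x + s)) ^ 2 = x * (1 - (√x / √(x + s)) ^ 2) := by
    rw [hq_sq]
    field_simp
    ring
  rw [div_eq_iff (by positivity), hkey]
  ring

/-- For `σ > 0` and `c > 0`,
`T · ∫₀^∞ (a/σ²) e^{−a²/(2σ²)} Q(a√(cT)) da → 1/(4σ²c)` as `T → ∞`. -/
theorem tendsto_rayleigh_expectation_gaussQ (σ c : ℝ) (hσ : 0 < σ) (hc : 0 < c) :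
    Tendsto (fun T : ℝ => T * ∫ a in Set.Ioi (0 : ℝ),
        (a / σ ^ 2) * Real.exp (-a ^ 2 / (2 * σ ^ 2)) * gaussQ (a * Real.sqrt (c * T)))
      atTop (nhds (1 / (4 * σ ^ 2 * c))) := by
  have hcT : Tendsto (fun T : ℝ ↦ c * T) atTop atTop := tendsto_id.const_mul_atTop hc
  have hlim := ((tendsto_mul_one_sub_sqrt_div_sqrt_add_const_atTop (1 / σ ^ 2)).comp hcT).const_mul
    (1 / (2 * c))
  have hvalue : 1 / (2 * c) * (1 / σ ^ 2 / 2) = 1 / (4 * σ ^ 2 * c) := by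
    field_simp
    norm_num
  rw [hvalue] at hlim
  refine hlim.congr' ?_
  filter_upwards [eventually_ge_atTop 0] with T hT
  rw [integral_Ioi_rayleigh_mul_gaussQ hσ.ne', Real.sq_sqrt (mul_nonneg hc.le hT),
    Function.comp_apply]
  field_simp
end

section
/- Let σ > 0, C > 0 and R > 0, and define E_a(R) = a²C/2 − R for a ≥ 2√(R/C), E_a(R) = (a√C − √R)² for √(R/C) ≤ a ≤ 2√(R/C), and E_a(R) = 0 for 0 ≤ a ≤ √(R/C). Then lim_{T→∞} ∫₀^∞ (a/σ²) e^{−a²/(2σ²)} e^{−T·E_a(R)} da = 1 − e^{−R/(2σ²C)}. -/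
open MeasureTheory Filter

/-- The reliability function of the infinite-bandwidth AWGN channel with capacity `a²C`,
at rate `R`, viewed as a function of the fading gain `a ≥ 0`:
`E_a(R) = a²C/2 − R` for `a ≥ 2√(R/C)`, `E_a(R) = (a√C − √R)²` for
`√(R/C) ≤ a ≤ 2√(R/C)`, and `E_a(R) = 0` for `0 ≤ a ≤ √(R/C)`. -/
noncomputable def fadingE (C R a : ℝ) : ℝ :=
  if a ≤ Real.sqrt (R / C) then 0
  else if a ≤ 2 * Real.sqrt (R / C) then (a * Real.sqrt C - Real.sqrt R) ^ 2
  else a ^ 2 * C / 2 - R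

/-!
For a nonnegative exponent `E`, the factor `e^{-T E}` decreases to the indicator of `{E = 0}` as
`T → ∞`, so by dominated convergence only the mass of the zero set survives. For the AWGN exponent
this set is the outage region `a ≤ √(R / C)`, whose Rayleigh probability is explicit because
`-e^{-a² / (2σ²)}` is a primitive of the density.
-/

open Topology

theorem tendsto_exp_neg_mul_smul_indicator {α G : Type*} [AddCommMonoid G] [TopologicalSpace G]
    [Module ℝ G] [ContinuousSMul ℝ G] {E : α → ℝ} {a : α} (f : α → G) (ha : 0 ≤ E a) :
    Tendsto (fun T : ℝ => Real.exp (-T * E a) • f a) atTop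
      (𝓝 ({x | E x = 0}.indicator f a)) := by
  rcases ha.eq_or_lt with hzero | hpos
  · simp [← hzero, tendsto_const_nhds]
  · have hexp : Tendsto (fun T : ℝ => Real.exp (-T * E a)) atTop (𝓝 0) :=
      Real.tendsto_exp_atBot.comp (tendsto_neg_atTop_atBot.atBot_mul_const hpos)
    simpa [hpos.ne'] using hexp.smul_const (f a)

theorem tendsto_integral_exp_neg_mul_smul {α G : Type*} [MeasurableSpace α] {μ : Measure α}
    [NormedAddCommGroup G] [NormedSpace ℝ G] {E : α → ℝ} {f : α → G}
    (hE : AEMeasurable E μ) (hE_nonneg : 0 ≤ᵐ[μ] E) (hf : Integrable f μ) :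
    Tendsto (fun T : ℝ => ∫ a, Real.exp (-T * E a) • f a ∂μ) atTop
      (𝓝 (∫ a in {a | E a = 0}, f a ∂μ)) := by
  have hzero : NullMeasurableSet {a | E a = 0} μ :=
    hE.nullMeasurable (measurableSet_singleton 0)
  rw [← integral_indicator₀ hzero]
  refine tendsto_integral_filter_of_dominated_convergence (fun a => ‖f a‖) ?_ ?_ hf.norm ?_
  · exact .of_forall fun T => (hE.const_mul (-T)).exp.aestronglyMeasurable.smul hf.1
  · filter_upwards [eventually_ge_atTop 0] with T hT
    filter_upwards [hE_nonneg] with a ha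
    have hexp : Real.exp (-T * E a) ≤ 1 :=
      Real.exp_le_one_iff.mpr (mul_nonpos_of_nonpos_of_nonneg (neg_nonpos.mpr hT) ha)
    simpa [norm_smul] using mul_le_of_le_one_left (norm_nonneg (f a)) hexp
  · filter_upwards [hE_nonneg] with a ha
    exact tendsto_exp_neg_mul_smul_indicator f ha

/-- The Rayleigh density `f_A(a) = (a / σ²) e^{-a² / (2σ²)}` with scale `σ`. It is not cut off
at `0`, so it is a probability density only after restriction to `a ≥ 0`. -/
noncomputable def rayleighDensity (σ a : ℝ) : ℝ :=
  a / σ ^ 2 * Real.exp (-a ^ 2 / (2 * σ ^ 2))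

theorem continuous_rayleighDensity (σ : ℝ) : Continuous (rayleighDensity σ) := by
  unfold rayleighDensity
  fun_prop

theorem integrable_rayleighDensity {σ : ℝ} (hσ : σ ≠ 0) : Integrable (rayleighDensity σ) := by
  have h := (integrable_mul_exp_neg_mul_sq (b := 1 / (2 * σ ^ 2)) (by positivity)).div_const (σ ^ 2)
  refine h.congr (.of_forall fun a => ?_)
  simp only [rayleighDensity]
  ring_nf

theorem hasDerivAt_neg_exp_neg_sq_div (σ a : ℝ) :
    HasDerivAt (fun x => -Real.exp (-x ^ 2 / (2 * σ ^ 2))) (rayleighDensity σ a) a := by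
  refine ((hasDerivAt_pow 2 a).neg.div_const (2 * σ ^ 2)).exp.neg.congr_deriv ?_
  simp only [rayleighDensity, Pi.neg_apply]
  push_cast
  ring

theorem integral_rayleighDensity (σ r : ℝ) :
    ∫ a in (0 : ℝ)..r, rayleighDensity σ a = 1 - Real.exp (-r ^ 2 / (2 * σ ^ 2)) := by
  rw [intervalIntegral.integral_eq_sub_of_hasDerivAt
    (fun a _ => hasDerivAt_neg_exp_neg_sq_div σ a)
    ((continuous_rayleighDensity σ).intervalIntegrable 0 r)]
  simp [neg_add_eq_sub]

theorem measurable_fadingE (C R : ℝ) : Measurable (fadingE C R) := by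
  unfold fadingE
  refine .ite measurableSet_Iic measurable_const (.ite measurableSet_Iic ?_ ?_) <;> fun_prop

section fadingE

variable {C R a : ℝ}

theorem fadingE_of_le (ha : a ≤ √(R / C)) : fadingE C R a = 0 :=
  if_pos ha

theorem fadingE_pos (hC : 0 < C) (ha : √(R / C) < a) : 0 < fadingE C R a := by
  rw [fadingE, if_neg ha.not_ge]
  split_ifs with h
  · have hroot : √R < a * √C := by
      rwa [Real.sqrt_div' R hC.le, div_lt_iff₀ (Real.sqrt_pos.mpr hC)] at ha
    exact pow_pos (sub_pos.mpr hroot) 2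
  · have hsq : R / C < (a / 2) ^ 2 := Real.lt_sq_of_sqrt_lt (by linarith)
    have hR : R < (a / 2) ^ 2 * C := (div_lt_iff₀ hC).mp hsq
    have hnonneg : 0 ≤ a ^ 2 * C := by positivity
    linarith

theorem fadingE_nonneg (hC : 0 < C) : 0 ≤ fadingE C R a :=
  (le_or_gt a √(R / C)).elim (fun ha => (fadingE_of_le ha).ge) fun ha => (fadingE_pos hC ha).le

theorem fadingE_eq_zero_iff (hC : 0 < C) : fadingE C R a = 0 ↔ a ≤ √(R / C) :=
  ⟨fun h => not_lt.mp fun ha => (fadingE_pos hC ha).ne' h, fadingE_of_le⟩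

end fadingE

/-- For `σ > 0`, `C > 0`, `R > 0`, the Rayleigh average of `e^{−T·E_a(R)}` converges,
as `T → ∞`, to the outage probability `1 − e^{−R/(2σ²C)}`. -/
theorem tendsto_rayleigh_fadingE (σ C R : ℝ) (hσ : 0 < σ) (hC : 0 < C) (hR : 0 < R) :
    Tendsto (fun T : ℝ => ∫ a in Set.Ioi (0 : ℝ),
        (a / σ ^ 2) * Real.exp (-a ^ 2 / (2 * σ ^ 2)) * Real.exp (-T * fadingE C R a))
      atTop (nhds (1 - Real.exp (-R / (2 * σ ^ 2 * C)))) := by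
  have hlim := tendsto_integral_exp_neg_mul_smul (μ := volume.restrict (Set.Ioi 0))
    (measurable_fadingE C R).aemeasurable (.of_forall fun _ => fadingE_nonneg hC)
    (integrable_rayleighDensity hσ.ne').restrict
  have houtage : ∫ a in {a | fadingE C R a = 0}, rayleighDensity σ a ∂volume.restrict (Set.Ioi 0)
      = 1 - Real.exp (-R / (2 * σ ^ 2 * C)) := calc
    _ = ∫ a in (0 : ℝ)..√(R / C), rayleighDensity σ a := by
      simp only [fadingE_eq_zero_iff hC, Set.Iic_def]
      rw [Measure.restrict_restrict measurableSet_Iic, Set.Iic_inter_Ioi,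
        intervalIntegral.integral_of_le (Real.sqrt_nonneg _)]
    _ = 1 - Real.exp (-√(R / C) ^ 2 / (2 * σ ^ 2)) := integral_rayleighDensity σ _
    _ = 1 - Real.exp (-R / (2 * σ ^ 2 * C)) := by
      rw [Real.sq_sqrt (div_pos hR hC).le, ← neg_div, div_div, mul_comm C]
  rw [houtage] at hlim
  simpa only [smul_eq_mul, mul_comm (Real.exp (-_ * _)), rayleighDensity] using hlim
end
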